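/- arXiv:1712.07385 — 6 statements merged into one kernel-verified Lean document; each statement's English description precedes it below -/
import Mathlib

section
/- Let h : ℝ → ℝ be nondecreasing and bi-Lipschitz with constants 0 < m ≤ M. For every N ≥ 1 and X ∈ ℝ^N, if L(X) > 0 then (1/N)·∑_{i=1}^N h(L(X) + X^i) = 0. -/
open Finset

/-- The constraint set `A(X) = {x ≥ 0 : (1/N)·∑ᵢ h(x + Xⁱ) ≥ 0}`. -/
def reflSet (h : ℝ → ℝ) (N : ℕ) (X : Fin N → ℝ) : Set ℝ :=
  {x : ℝ | 0 ≤ x ∧ 0 ≤ (1 / (N : ℝ)) * ∑ i, h (x + X i)}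

/-- The reflection operator `L(X) = inf A(X)`. -/
noncomputable def Lrefl (h : ℝ → ℝ) (N : ℕ) (X : Fin N → ℝ) : ℝ :=
  sInf (reflSet h N X)

theorem constraint_saturated_of_Lrefl_pos
    (h : ℝ → ℝ) (m M : ℝ) (hm : 0 < m) (hmM : m ≤ M)
    (hmono : Monotone h)
    (hbilip : ∀ x y : ℝ, m * |x - y| ≤ |h x - h y| ∧ |h x - h y| ≤ M * |x - y|)
    (N : ℕ) (hN : 1 ≤ N) (X : Fin N → ℝ)
    (hpos : 0 < Lrefl h N X) :
    (1 / (N : ℝ)) * ∑ i, h (Lrefl h N X + X i) = 0 := by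
  have hcont : Continuous h := by
    have hl : LipschitzWith (Real.toNNReal M) h := by
      apply LipschitzWith.of_dist_le_mul
      intro x y
      rw [Real.dist_eq, Real.dist_eq, Real.coe_toNNReal M (by linarith)]
      exact (hbilip x y).2
    exact hl.continuous
  have hF : Continuous (fun x : ℝ => (1 / (N : ℝ)) * ∑ i, h (x + X i)) := by
    fun_prop
  have hne : (reflSet h N X).Nonempty := by
    by_contra hcon
    rw [Set.not_nonempty_iff_eq_empty] at hcon
    rw [Lrefl, hcon, Real.sInf_empty] at hpos
    exact lt_irrefl _ hpos
  have hbdd : BddBelow (reflSet h N X) := ⟨0, fun x hx => hx.1⟩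
  have hclosed : IsClosed (reflSet h N X) :=
    (isClosed_le continuous_const continuous_id).inter (isClosed_le continuous_const hF)
  have hmem : Lrefl h N X ∈ reflSet h N X := hclosed.csInf_mem hne hbdd
  refine le_antisymm ?_ hmem.2
  by_contra hcon
  rw [not_le] at hcon
  have hev := (hF.tendsto (Lrefl h N X)).eventually (lt_mem_nhds hcon)
  obtain ⟨ε, hε, hb⟩ := Metric.eventually_nhds_iff.1 hev
  set l := Lrefl h N X with hl
  have hd : 0 < min (ε / 2) l := lt_min (by linarith) hpos
  have h1 := min_le_left (ε / 2) l
  have h2 := min_le_right (ε / 2) l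
  have hy : l - min (ε / 2) l ∈ reflSet h N X := by
    refine ⟨by linarith, le_of_lt (hb ?_)⟩
    rw [Real.dist_eq, abs_lt]
    constructor <;> linarith
  have h3 : l ≤ l - min (ε / 2) l := csInf_le hbdd hy
  linarith
end

section
/- Let h : ℝ → ℝ be nondecreasing and bi-Lipschitz with constants 0 < m ≤ M. For every N ≥ 1 and all X, Y ∈ ℝ^N, |L(X) − L(Y)| ≤ (M/m)·(1/N)·∑_{j=1}^N |X^j − Y^j|. -/
open Finset

theorem Lrefl_aux
    (h : ℝ → ℝ) (m M : ℝ) (hm : 0 < m) (hmM : m ≤ M)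
    (hmono : Monotone h)
    (hbilip : ∀ x y : ℝ, m * |x - y| ≤ |h x - h y| ∧ |h x - h y| ≤ M * |x - y|)
    (N : ℕ) (hN : 1 ≤ N) (X Y : Fin N → ℝ) :
    Lrefl h N X ≤ Lrefl h N Y + (M / m) * ((1 / (N : ℝ)) * ∑ j, |X j - Y j|) := by
  have hN1 : (1 : ℝ) ≤ N := by exact_mod_cast hN
  have hN0 : (0 : ℝ) < N := by linarith
  have hM : 0 < M := by linarith
  have hinc : ∀ x d : ℝ, 0 ≤ d → h x + m * d ≤ h (x + d) := by
    intro x d hd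
    have h1 := (hbilip (x + d) x).1
    have h2 : h x ≤ h (x + d) := hmono (by linarith)
    rw [abs_of_nonneg (by linarith : 0 ≤ h (x + d) - h x), add_sub_cancel_left,
      abs_of_nonneg hd] at h1
    linarith
  have hS : 0 ≤ ∑ j, |X j - Y j| := Finset.sum_nonneg fun j _ => abs_nonneg _
  obtain ⟨d, hd⟩ : ∃ d, d = (M / m) * ((1 / (N : ℝ)) * ∑ j, |X j - Y j|) := ⟨_, rfl⟩
  have hd0 : 0 ≤ d := by rw [hd]; positivity
  have hdS : N * (m * d) = M * ∑ j, |X j - Y j| := by rw [hd]; field_simp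
  rw [← hd]
  have hne : (reflSet h N Y).Nonempty := by
    refine ⟨|∑ i, h (Y i)| / m, by positivity, mul_nonneg (by positivity) ?_⟩
    have h1 : ∑ i, (h (Y i) + m * (|∑ i, h (Y i)| / m)) ≤
        ∑ i, h (|∑ i, h (Y i)| / m + Y i) := by
      refine Finset.sum_le_sum fun i _ => ?_
      rw [add_comm _ (Y i)]
      exact hinc _ _ (by positivity)
    rw [Finset.sum_add_distrib, mul_div_cancel₀ _ hm.ne'] at h1
    simp only [Finset.sum_const, Finset.card_univ, Fintype.card_fin, nsmul_eq_mul] at h1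
    have h2 := neg_abs_le (∑ i, h (Y i))
    nlinarith [abs_nonneg (∑ i, h (Y i))]
  have key : Lrefl h N X - d ≤ Lrefl h N Y := by
    refine le_csInf hne ?_
    rintro x ⟨hx0, hx⟩
    have hx' : 0 ≤ ∑ i, h (x + Y i) := by
      exact nonneg_of_mul_nonneg_right hx (by positivity)
    have hmem : x + d ∈ reflSet h N X := by
      refine ⟨by positivity, mul_nonneg (by positivity) ?_⟩
      have h1 : ∑ i, (h (x + Y i) - M * |X i - Y i| + m * d) ≤ ∑ i, h (x + d + X i) := by
        refine Finset.sum_le_sum fun i _ => ?_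
        have a := hinc (x + X i) d hd0
        have b := (hbilip (x + X i) (x + Y i)).2
        rw [add_sub_add_left_eq_sub] at b
        have c := neg_abs_le (h (x + X i) - h (x + Y i))
        rw [add_right_comm x d]
        linarith
      rw [Finset.sum_add_distrib, Finset.sum_sub_distrib, ← Finset.mul_sum] at h1
      simp only [Finset.sum_const, Finset.card_univ, Fintype.card_fin, nsmul_eq_mul] at h1
      linarith
    have : Lrefl h N X ≤ x + d := csInf_le ⟨0, fun y hy => hy.1⟩ hmem
    linarith
  linarith

theorem Lrefl_lipschitz
    (h : ℝ → ℝ) (m M : ℝ) (hm : 0 < m) (hmM : m ≤ M)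
    (hmono : Monotone h)
    (hbilip : ∀ x y : ℝ, m * |x - y| ≤ |h x - h y| ∧ |h x - h y| ≤ M * |x - y|)
    (N : ℕ) (hN : 1 ≤ N) (X Y : Fin N → ℝ) :
    |Lrefl h N X - Lrefl h N Y| ≤ (M / m) * ((1 / (N : ℝ)) * ∑ j, |X j - Y j|) := by
  have h1 := Lrefl_aux h m M hm hmM hmono hbilip N hN X Y
  have h2 := Lrefl_aux h m M hm hmM hmono hbilip N hN Y X
  simp only [abs_sub_comm (Y _) (X _)] at h2
  rw [abs_le]
  constructor <;> linarith
end

section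
/- Let h : ℝ → ℝ be nondecreasing and bi-Lipschitz with constants 0 < m ≤ M, and set x₀ := inf{x ≥ 0 : h(x) ≥ 0}. Then x₀ is a well-defined (finite) nonnegative real, L(0,…,0) = x₀, and for every N ≥ 1 and X ∈ ℝ^N, 0 ≤ L(X) ≤ x₀ + (M/m)·(1/N)·∑_{j=1}^N |X^j|. -/
open Finset

/-- `x₀ = inf {x ≥ 0 : h(x) ≥ 0}`. -/
noncomputable def xZero (h : ℝ → ℝ) : ℝ :=
  sInf {x : ℝ | 0 ≤ x ∧ 0 ≤ h x}

theorem Lrefl_growth_bound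
    (h : ℝ → ℝ) (m M : ℝ) (hm : 0 < m) (hmM : m ≤ M)
    (hmono : Monotone h)
    (hbilip : ∀ x y : ℝ, m * |x - y| ≤ |h x - h y| ∧ |h x - h y| ≤ M * |x - y|) :
    ({x : ℝ | 0 ≤ x ∧ 0 ≤ h x}).Nonempty ∧ BddBelow {x : ℝ | 0 ≤ x ∧ 0 ≤ h x} ∧
      0 ≤ xZero h ∧
      (∀ N : ℕ, 1 ≤ N → Lrefl h N (fun _ => (0 : ℝ)) = xZero h) ∧
      ∀ (N : ℕ), 1 ≤ N → ∀ X : Fin N → ℝ,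
        0 ≤ Lrefl h N X ∧
        Lrefl h N X ≤ xZero h + (M / m) * ((1 / (N : ℝ)) * ∑ j, |X j|) := by
  have hlow : ∀ a d : ℝ, 0 ≤ d → h a + m * d ≤ h (a + d) := by
    intro a d hd
    have h1 := (hbilip (a + d) a).1
    have h2 : h a ≤ h (a + d) := hmono (by linarith)
    rw [add_sub_cancel_left, abs_of_nonneg hd, abs_of_nonneg (by linarith)] at h1
    linarith
  have hup : ∀ a d : ℝ, h a - M * |d| ≤ h (a + d) := by
    intro a d
    have h1 := (hbilip (a + d) a).2
    rw [add_sub_cancel_left] at h1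
    have h2 := neg_abs_le (h (a + d) - h a)
    linarith
  have hne : ({x : ℝ | 0 ≤ x ∧ 0 ≤ h x}).Nonempty := by
    refine ⟨0 + |h 0| / m, by positivity, ?_⟩
    have h1 := hlow 0 (|h 0| / m) (by positivity)
    rw [mul_div_cancel₀ _ hm.ne'] at h1
    have h2 := neg_abs_le (h 0)
    linarith
  refine ⟨hne, ⟨0, fun x hx => hx.1⟩, Real.sInf_nonneg (fun x hx => hx.1), ?_, ?_⟩
  · intro N hN
    have hN' : (N : ℝ) ≠ 0 := by
      have : N ≠ 0 := by omega
      exact_mod_cast this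
    unfold Lrefl xZero reflSet
    congr 1
    ext x
    simp [hN']
  · intro N hN X
    have hN' : (N : ℝ) ≠ 0 := by
      have : N ≠ 0 := by omega
      exact_mod_cast this
    refine ⟨Real.sInf_nonneg (fun x hx => hx.1), ?_⟩
    have hM : 0 < M := lt_of_lt_of_le hm hmM
    have hS : 0 ≤ ∑ j, |X j| := Finset.sum_nonneg (fun j _ => abs_nonneg _)
    set S := ∑ j, |X j| with hSdef
    set D := (M / m) * ((1 / (N : ℝ)) * S) with hD
    have hD0 : 0 ≤ D := by positivity
    have key : ∀ a ∈ {x : ℝ | 0 ≤ x ∧ 0 ≤ h x}, Lrefl h N X - D ≤ a := by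
      rintro a ⟨ha, hha⟩
      have hmem : a + D ∈ reflSet h N X := by
        refine ⟨by positivity, mul_nonneg (by positivity) ?_⟩
        have h1 : ∑ i, (m * D - M * |X i|) ≤ ∑ i, h (a + D + X i) := by
          refine Finset.sum_le_sum (fun i _ => ?_)
          have := hup (a + D) (X i)
          have := hlow a D hD0
          linarith
        have h2 : ∑ i, (m * D - M * |X i|) = 0 := by
          rw [Finset.sum_sub_distrib, ← Finset.mul_sum (f := fun i => |X i|), ← hSdef]
          simp only [Finset.sum_const, Finset.card_univ, Fintype.card_fin, nsmul_eq_mul, hD]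
          field_simp
          ring
        linarith
      have : Lrefl h N X ≤ a + D := csInf_le ⟨0, fun x hx => hx.1⟩ hmem
      linarith
    have : Lrefl h N X - D ≤ xZero h := le_csInf hne key
    linarith
end

section
/- Let h : ℝ → ℝ be nondecreasing and bi-Lipschitz with constants 0 < m ≤ M, and let μ and ν be Borel probability measures on ℝ with finite first moments, with unique roots x*(μ) and x*(ν) of H(·, μ) and H(·, ν) respectively. Then |Λ(μ) − Λ(ν)| ≤ |x*(μ) − x*(ν)| ≤ (1/m)·|∫ h(x*(μ) + y) dν(y)| = (1/m)·|H(x*(μ), ν) − H(x*(μ), μ)|. -/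
open MeasureTheory

/-- `Λ(μ) = inf {x ≥ 0 : ∫ h(x + y) dμ(y) ≥ 0}`, the reflection-in-law operator. -/
noncomputable def LambdaRefl (h : ℝ → ℝ) (μ : Measure ℝ) : ℝ :=
  sInf {x : ℝ | 0 ≤ x ∧ 0 ≤ ∫ y, h (x + y) ∂μ}

theorem aux_integrable (h : ℝ → ℝ) (M : ℝ) (hmono : Monotone h)
    (hM : ∀ x y : ℝ, |h x - h y| ≤ M * |x - y|)
    (μ : Measure ℝ) [IsProbabilityMeasure μ] (hμ : Integrable (fun y : ℝ => y) μ) (x : ℝ) :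
    Integrable (fun y => h (x + y)) μ := by
  have hg : Integrable (fun y : ℝ => M * |y| + |h x|) μ :=
    (hμ.abs.const_mul M).add (integrable_const _)
  refine hg.mono' (hmono.measurable.comp (measurable_const_add x)).aestronglyMeasurable ?_
  refine Filter.Eventually.of_forall fun y => ?_
  have h1 := hM (x + y) x
  rw [add_sub_cancel_left] at h1
  have h2 := abs_add_le (h (x + y) - h x) (h x)
  rw [sub_add_cancel] at h2
  rw [Real.norm_eq_abs]
  linarith

theorem aux_lower (h : ℝ → ℝ) (m M : ℝ) (hmono : Monotone h)
    (hbilip : ∀ x y : ℝ, m * |x - y| ≤ |h x - h y| ∧ |h x - h y| ≤ M * |x - y|)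
    (μ : Measure ℝ) [IsProbabilityMeasure μ] (hμ : Integrable (fun y : ℝ => y) μ)
    (a b : ℝ) (hab : a ≤ b) :
    m * (b - a) ≤ (∫ y, h (b + y) ∂μ) - ∫ y, h (a + y) ∂μ := by
  have hI := aux_integrable h M hmono (fun x y => (hbilip x y).2) μ hμ
  rw [← integral_sub (hI b) (hI a)]
  have h0 : (∫ _y : ℝ, m * (b - a) ∂μ) = m * (b - a) := by simp
  rw [← h0]
  refine integral_mono (integrable_const _) ((hI b).sub (hI a)) fun y => ?_
  have h1 := (hbilip (b + y) (a + y)).1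
  rw [abs_of_nonneg (sub_nonneg.2 (hmono (by linarith : a + y ≤ b + y))),
    abs_of_nonneg (by linarith)] at h1
  have h2 : b + y - (a + y) = b - a := by ring
  rw [h2] at h1
  exact h1

theorem aux_Lambda (h : ℝ → ℝ) (m M : ℝ) (hm : 0 < m) (hmono : Monotone h)
    (hbilip : ∀ x y : ℝ, m * |x - y| ≤ |h x - h y| ∧ |h x - h y| ≤ M * |x - y|)
    (μ : Measure ℝ) [IsProbabilityMeasure μ] (hμ : Integrable (fun y : ℝ => y) μ)
    (r : ℝ) (hr : (∫ y, h (r + y) ∂μ) = 0) : LambdaRefl h μ = max r 0 := by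
  have hset : {x : ℝ | 0 ≤ x ∧ 0 ≤ ∫ y, h (x + y) ∂μ} = Set.Ici (max r 0) := by
    ext x
    simp only [Set.mem_setOf_eq, Set.mem_Ici, max_le_iff]
    constructor
    · rintro ⟨h1, h2⟩
      refine ⟨?_, h1⟩
      by_contra hc
      push Not at hc
      have := aux_lower h m M hmono hbilip μ hμ x r hc.le
      have := mul_pos hm (sub_pos.2 hc)
      linarith
    · rintro ⟨h1, h2⟩
      refine ⟨h2, ?_⟩
      have := aux_lower h m M hmono hbilip μ hμ r x h1
      have := mul_nonneg hm.le (sub_nonneg.2 h1)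
      linarith
  rw [LambdaRefl, hset, csInf_Ici]

theorem LambdaRefl_roots_estimate
    (h : ℝ → ℝ) (m M : ℝ) (hm : 0 < m) (hmM : m ≤ M)
    (hmono : Monotone h)
    (hbilip : ∀ x y : ℝ, m * |x - y| ≤ |h x - h y| ∧ |h x - h y| ≤ M * |x - y|)
    (μ ν : Measure ℝ) [IsProbabilityMeasure μ] [IsProbabilityMeasure ν]
    (hμ : Integrable (fun y : ℝ => y) μ) (hν : Integrable (fun y : ℝ => y) ν)
    (xμ xν : ℝ)
    (hrootμ : (∫ y, h (xμ + y) ∂μ) = 0) (hrootν : (∫ y, h (xν + y) ∂ν) = 0) :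
    |LambdaRefl h μ - LambdaRefl h ν| ≤ |xμ - xν| ∧
    |xμ - xν| ≤ (1 / m) * |∫ y, h (xμ + y) ∂ν| ∧
    |∫ y, h (xμ + y) ∂ν| = |(∫ y, h (xμ + y) ∂ν) - ∫ y, h (xμ + y) ∂μ| := by
  refine ⟨?_, ?_, by rw [hrootμ, sub_zero]⟩
  · rw [aux_Lambda h m M hm hmono hbilip μ hμ xμ hrootμ,
      aux_Lambda h m M hm hmono hbilip ν hν xν hrootν]
    exact abs_max_sub_max_le_abs _ _ _
  · rw [one_div, ← div_eq_inv_mul, le_div_iff₀ hm, mul_comm]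
    rcases le_total xμ xν with hc | hc
    · have := aux_lower h m M hmono hbilip ν hν xμ xν hc
      rw [abs_of_nonpos (sub_nonpos.2 hc)]
      have := neg_le_abs (∫ y, h (xμ + y) ∂ν)
      linarith
    · have := aux_lower h m M hmono hbilip ν hν xν xμ hc
      rw [abs_of_nonneg (sub_nonneg.2 hc)]
      have := le_abs_self (∫ y, h (xμ + y) ∂ν)
      linarith
end

section
/- Let h : ℝ → ℝ be nondecreasing and bi-Lipschitz with constants 0 < m ≤ M, and let X and Y be integrable real random variables on a probability space (Ω, F, P). Define ρ(X) := inf{x ≥ 0 : E[h(x + X)] ≥ 0} (and similarly ρ(Y)). Then ρ(X) and ρ(Y) are well-defined nonnegative reals and |ρ(X) − ρ(Y)| ≤ (M/m)·E[|X − Y|]. -/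
open MeasureTheory

/-- `ρ(X) = inf {x ≥ 0 : E[h(x + X)] ≥ 0}`, the one-dimensional reflection map. -/
noncomputable def rhoRefl {Ω : Type*} [MeasurableSpace Ω] (P : Measure Ω)
    (h : ℝ → ℝ) (X : Ω → ℝ) : ℝ :=
  sInf {x : ℝ | 0 ≤ x ∧ 0 ≤ ∫ ω, h (x + X ω) ∂P}

theorem rho_aux_int {Ω : Type*} [MeasurableSpace Ω] (P : Measure Ω) [IsProbabilityMeasure P]
    (h : ℝ → ℝ) (m M : ℝ) (hmono : Monotone h)
    (hbilip : ∀ x y : ℝ, m * |x - y| ≤ |h x - h y| ∧ |h x - h y| ≤ M * |x - y|)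
    (X : Ω → ℝ) (hX : Integrable X P) (x : ℝ) : Integrable (fun ω => h (x + X ω)) P := by
  have h1 : Integrable (fun ω => |h 0| + M * |x + X ω|) P :=
    (integrable_const _).add ((((integrable_const x).add hX).abs).const_mul M)
  refine h1.mono' ?_ ?_
  · exact (hmono.measurable.comp_aemeasurable
      ((aemeasurable_const).add hX.aemeasurable)).aestronglyMeasurable
  · refine Filter.Eventually.of_forall fun ω => ?_
    have := (hbilip (x + X ω) 0).2
    rw [sub_zero] at this
    have h2 := abs_sub_abs_le_abs_sub (h (x + X ω)) (h 0)
    rw [Real.norm_eq_abs]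
    linarith

theorem rho_aux_step (h : ℝ → ℝ) (m M : ℝ) (hmono : Monotone h)
    (hbilip : ∀ x y : ℝ, m * |x - y| ≤ |h x - h y| ∧ |h x - h y| ≤ M * |x - y|)
    (x d a b : ℝ) (hd : 0 ≤ d) :
    h (x + a) - M * |a - b| + m * d ≤ h ((x + d) + b) := by
  have h1 := (hbilip (x + d + b) (x + b)).1
  have h2 := (hbilip (x + a) (x + b)).2
  have h3 : h (x + b) ≤ h (x + d + b) := hmono (by linarith)
  rw [abs_of_nonneg (sub_nonneg.2 h3), show x + d + b - (x + b) = d by ring,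
    abs_of_nonneg hd] at h1
  rw [show x + a - (x + b) = a - b by ring] at h2
  have h4 := le_abs_self (h (x + a) - h (x + b))
  linarith

theorem rho_aux_shift {Ω : Type*} [MeasurableSpace Ω] (P : Measure Ω) [IsProbabilityMeasure P]
    (h : ℝ → ℝ) (m M : ℝ) (hmono : Monotone h)
    (hbilip : ∀ x y : ℝ, m * |x - y| ≤ |h x - h y| ∧ |h x - h y| ≤ M * |x - y|)
    (X Y : Ω → ℝ) (hX : Integrable X P) (hY : Integrable Y P) (x d : ℝ) (hd : 0 ≤ d) :
    (∫ ω, h (x + X ω) ∂P) - M * (∫ ω, |X ω - Y ω| ∂P) + m * d ≤ ∫ ω, h ((x + d) + Y ω) ∂P := by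
  have i1 := rho_aux_int P h m M hmono hbilip X hX x
  have i2 : Integrable (fun ω => M * |X ω - Y ω|) P := ((hX.sub hY).abs).const_mul M
  have i3 : Integrable (fun ω => h (x + X ω) - M * |X ω - Y ω|) P := i1.sub i2
  have i4 : Integrable (fun _ : Ω => m * d) P := integrable_const _
  have e : ∫ ω, (h (x + X ω) - M * |X ω - Y ω| + m * d) ∂P
      = (∫ ω, h (x + X ω) ∂P) - M * (∫ ω, |X ω - Y ω| ∂P) + m * d := by
    rw [integral_add i3 i4, integral_sub i1 i2, integral_const_mul]
    simp
  rw [← e]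
  exact integral_mono (i3.add i4) (rho_aux_int P h m M hmono hbilip Y hY (x + d))
    fun ω => rho_aux_step h m M hmono hbilip x d (X ω) (Y ω) hd

theorem rho_aux_nonempty {Ω : Type*} [MeasurableSpace Ω] (P : Measure Ω) [IsProbabilityMeasure P]
    (h : ℝ → ℝ) (m M : ℝ) (hm : 0 < m) (hmono : Monotone h)
    (hbilip : ∀ x y : ℝ, m * |x - y| ≤ |h x - h y| ∧ |h x - h y| ≤ M * |x - y|)
    (X : Ω → ℝ) (hX : Integrable X P) :
    ({x : ℝ | 0 ≤ x ∧ 0 ≤ ∫ ω, h (x + X ω) ∂P}).Nonempty := by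
  have hd : 0 ≤ |∫ ω, h (0 + X ω) ∂P| / m := by positivity
  have := rho_aux_shift P h m M hmono hbilip X X hX hX 0 _ hd
  refine ⟨0 + |∫ ω, h (0 + X ω) ∂P| / m, by simpa using hd, ?_⟩
  refine le_trans ?_ this
  rw [mul_div_cancel₀ _ hm.ne']
  have := neg_abs_le (∫ ω, h (0 + X ω) ∂P)
  simp only [sub_self, abs_zero, integral_zero, mul_zero, sub_zero]
  linarith

theorem rho_aux_le {Ω : Type*} [MeasurableSpace Ω] (P : Measure Ω) [IsProbabilityMeasure P]
    (h : ℝ → ℝ) (m M : ℝ) (hm : 0 < m) (hmM : m ≤ M) (hmono : Monotone h)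
    (hbilip : ∀ x y : ℝ, m * |x - y| ≤ |h x - h y| ∧ |h x - h y| ≤ M * |x - y|)
    (X Y : Ω → ℝ) (hX : Integrable X P) (hY : Integrable Y P) :
    rhoRefl P h Y - (M / m) * ∫ ω, |X ω - Y ω| ∂P ≤ rhoRefl P h X := by
  have hE : 0 ≤ ∫ ω, |X ω - Y ω| ∂P := integral_nonneg fun ω => abs_nonneg _
  have hM : 0 < M := hm.trans_le hmM
  have hd : 0 ≤ (M / m) * ∫ ω, |X ω - Y ω| ∂P := by positivity
  refine le_csInf (rho_aux_nonempty P h m M hm hmono hbilip X hX) ?_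
  rintro x ⟨hx0, hx⟩
  have hs := rho_aux_shift P h m M hmono hbilip X Y hX hY x _ hd
  rw [← mul_assoc, mul_div_cancel₀ _ hm.ne'] at hs
  rw [sub_le_iff_le_add]
  exact csInf_le ⟨0, fun y hy => hy.1⟩ ⟨by linarith, by linarith⟩

theorem rhoRefl_lipschitz
    {Ω : Type*} [MeasurableSpace Ω] (P : Measure Ω) [IsProbabilityMeasure P]
    (h : ℝ → ℝ) (m M : ℝ) (hm : 0 < m) (hmM : m ≤ M)
    (hmono : Monotone h)
    (hbilip : ∀ x y : ℝ, m * |x - y| ≤ |h x - h y| ∧ |h x - h y| ≤ M * |x - y|)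
    (X Y : Ω → ℝ) (hX : Integrable X P) (hY : Integrable Y P) :
    ({x : ℝ | 0 ≤ x ∧ 0 ≤ ∫ ω, h (x + X ω) ∂P}).Nonempty ∧
    BddBelow {x : ℝ | 0 ≤ x ∧ 0 ≤ ∫ ω, h (x + X ω) ∂P} ∧
    0 ≤ rhoRefl P h X ∧
    |rhoRefl P h X - rhoRefl P h Y| ≤ (M / m) * ∫ ω, |X ω - Y ω| ∂P := by
  have a := rho_aux_le P h m M hm hmM hmono hbilip X Y hX hY
  have b := rho_aux_le P h m M hm hmM hmono hbilip Y X hY hX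
  simp only [abs_sub_comm (Y _) (X _)] at b
  refine ⟨rho_aux_nonempty P h m M hm hmono hbilip X hX, ⟨0, fun y hy => hy.1⟩,
    Real.sInf_nonneg fun y hy => hy.1, ?_⟩
  rw [abs_le]
  constructor <;> linarith
end

section
/- Let h : ℝ → ℝ be nondecreasing and bi-Lipschitz with constants 0 < m ≤ M, and let ξ be an integrable real random variable on a probability space (Ω, F, P) with E[h(ξ)] ≥ 0. Then ρ(ξ) = 0, and consequently for every integrable real random variable X on the same probability space, ρ(X) ≤ (M/m)·E[|X − ξ|]. -/
open MeasureTheory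

theorem rhoRefl_eq_zero_and_bound
    {Ω : Type*} [MeasurableSpace Ω] (P : Measure Ω) [IsProbabilityMeasure P]
    (h : ℝ → ℝ) (m M : ℝ) (hm : 0 < m) (hmM : m ≤ M)
    (hmono : Monotone h)
    (hbilip : ∀ x y : ℝ, m * |x - y| ≤ |h x - h y| ∧ |h x - h y| ≤ M * |x - y|)
    (ξ : Ω → ℝ) (hξ : Integrable ξ P) (hξ0 : 0 ≤ ∫ ω, h (ξ ω) ∂P) :
    rhoRefl P h ξ = 0 ∧
    ∀ X : Ω → ℝ, Integrable X P →
      rhoRefl P h X ≤ (M / m) * ∫ ω, |X ω - ξ ω| ∂P := by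
  have hint : ∀ Y : Ω → ℝ, Integrable Y P → Integrable (fun ω => h (Y ω)) P := by
    intro Y hY
    have hg : Integrable (fun ω => |h 0| + M * |Y ω|) P :=
      (integrable_const _).add (hY.abs.const_mul M)
    refine hg.mono' (hmono.measurable.comp_aemeasurable hY.aemeasurable).aestronglyMeasurable ?_
    refine Filter.Eventually.of_forall fun ω => ?_
    have h1 := (hbilip (Y ω) 0).2
    have h2 := abs_add_le (h (Y ω) - h 0) (h 0)
    simp only [sub_zero, sub_add_cancel] at h1 h2
    rw [Real.norm_eq_abs]
    linarith
  have hbdd : ∀ Y : Ω → ℝ, BddBelow {x : ℝ | 0 ≤ x ∧ 0 ≤ ∫ ω, h (x + Y ω) ∂P} :=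
    fun Y => ⟨0, fun x hx => hx.1⟩
  refine ⟨le_antisymm (csInf_le (hbdd ξ) ⟨le_rfl, by simpa using hξ0⟩)
    (Real.sInf_nonneg fun x hx => hx.1), ?_⟩
  intro X hX
  have hI : 0 ≤ ∫ ω, |X ω - ξ ω| ∂P := integral_nonneg fun ω => abs_nonneg _
  have hc : 0 ≤ (M / m) * ∫ ω, |X ω - ξ ω| ∂P :=
    mul_nonneg (div_nonneg (hm.le.trans hmM) hm.le) hI
  have hmc : m * ((M / m) * ∫ ω, |X ω - ξ ω| ∂P) = M * ∫ ω, |X ω - ξ ω| ∂P := by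
    field_simp
  refine csInf_le (hbdd X) ⟨hc, ?_⟩
  generalize (M / m) * ∫ ω, |X ω - ξ ω| ∂P = c at hc hmc
  have habs : Integrable (fun ω => |X ω - ξ ω|) P := (hX.sub hξ).abs
  have hsub : Integrable (fun ω => h (ξ ω) - M * |X ω - ξ ω|) P :=
    (hint ξ hξ).sub (habs.const_mul M)
  have key : ∫ ω, (h (ξ ω) - M * |X ω - ξ ω| + m * c) ∂P ≤ ∫ ω, h (c + X ω) ∂P := by
    refine integral_mono (hsub.add (integrable_const _))
      (hint (fun ω => c + X ω) ((integrable_const c).add hX)) fun ω => ?_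
    have h1 := (hbilip (c + X ω) (X ω)).1
    have h2 := (hbilip (X ω) (ξ ω)).2
    have h3 : h (X ω) ≤ h (c + X ω) := hmono (by linarith)
    rw [abs_of_nonneg (sub_nonneg.2 h3), add_sub_cancel_right, abs_of_nonneg hc] at h1
    have h4 := neg_abs_le (h (X ω) - h (ξ ω))
    show h (ξ ω) - M * |X ω - ξ ω| + m * c ≤ h (c + X ω)
    linarith
  rw [integral_add hsub (integrable_const _), integral_sub (hint ξ hξ) (habs.const_mul M),
    integral_const_mul] at key
  simp only [integral_const, probReal_univ, one_smul] at key
  linarith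
end
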